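/- Let c ∈ ℝ, σ ∈ M_n(ℂ) constant, τ : ℝ → M_n(ℂ) continuous and 2π-periodic, and let g : ℝ² → GL(n,ℂ) be a twice continuously differentiable solution of the generalized Maxwell–Bloch equation ∂_t((∂_t g)·g⁻¹) + c·∂_x((∂_t g)·g⁻¹) = [σ, g·τ(x)·g⁻¹], 2π-periodic in x. Let ξ : ℝ → M_n(ℂ) be continuous, 2π-periodic, with ξ(x)·τ(x) = τ(x)·ξ(x) for every x. Then the quantity t ↦ ∫₀^{2π} Tr( ( (∂_t g)·g⁻¹ + c·(∂_x g)·g⁻¹ )(t,x) · g(t,x)·ξ(x)·g(t,x)⁻¹ ) dx is constant in t. (This is the conserved quantity — a component of the moment map — associated with the right action of the loop group of the torus centralizing τ; the combination g_t g⁻¹ + c·g_x g⁻¹ is the one for which the conservation law holds exactly.) -/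

import Mathlib

/-!
The integrand is constant in `t` at every fixed `x`, so no integration by parts is needed.
By cyclicity of the trace it equals `Tr (g⁻¹ (g_t + c g_x) ξ)`. Writing `A = g_t g⁻¹`, equality of
the mixed partials `g_tx = g_xt` gives `∂_t (g⁻¹ g_t) = g⁻¹ A_t g` and
`∂_t (g⁻¹ g_x) = g⁻¹ A_x g`. The equation therefore yields
`∂_t (g⁻¹ (g_t + c g_x)) = g⁻¹ [σ, g τ g⁻¹] g = [g⁻¹ σ g, τ]`, and `Tr ([S, τ] ξ) = 0`
because `ξ` commutes with `τ`.
-/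

open Matrix

/-- Partial derivative in `t` (entrywise) of a matrix-valued function of `(t, x)`. -/
noncomputable def mdt {n : ℕ} (M : ℝ → ℝ → Matrix (Fin n) (Fin n) ℂ) :
    ℝ → ℝ → Matrix (Fin n) (Fin n) ℂ :=
  fun t x => Matrix.of fun i j => deriv (fun s => M s x i j) t

/-- Partial derivative in `x` (entrywise) of a matrix-valued function of `(t, x)`. -/
noncomputable def mdx {n : ℕ} (M : ℝ → ℝ → Matrix (Fin n) (Fin n) ℂ) :
    ℝ → ℝ → Matrix (Fin n) (Fin n) ℂ :=
  fun t x => Matrix.of fun i j => deriv (fun s => M t s i j) x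

section MatrixCalculus

-- Any submultiplicative norm serves: it makes the product rule and the derivative of inversion
-- available for matrices, and derivatives are still entrywise.
attribute [local instance] Matrix.linftyOpNormedRing Matrix.linftyOpNormedAlgebra

lemma hasDerivAt_of_entries {n : ℕ} {M : ℝ → Matrix (Fin n) (Fin n) ℂ}
    {M' : Matrix (Fin n) (Fin n) ℂ} {t : ℝ}
    (h : ∀ i j, HasDerivAt (fun s => M s i j) (M' i j) t) : HasDerivAt M M' t :=
  hasDerivAt_pi.2 fun i => hasDerivAt_pi.2 fun j => h i j

lemma hasDerivAt_entry {n : ℕ} {M : ℝ → Matrix (Fin n) (Fin n) ℂ}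
    {M' : Matrix (Fin n) (Fin n) ℂ} {t : ℝ} (h : HasDerivAt M M' t) (i j : Fin n) :
    HasDerivAt (fun s => M s i j) (M' i j) t :=
  hasDerivAt_pi.1 (hasDerivAt_pi.1 h i) j

lemma hasDerivAt_matrix_inv {n : ℕ} {M : ℝ → Matrix (Fin n) (Fin n) ℂ}
    {M' : Matrix (Fin n) (Fin n) ℂ} {t : ℝ} (h : HasDerivAt M M' t) (hu : IsUnit (M t)) :
    HasDerivAt (fun s => (M s)⁻¹) (-((M t)⁻¹ * M' * (M t)⁻¹)) t := by
  obtain ⟨u, hu⟩ := hu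
  have h1 := hasFDerivAt_ringInverse (𝕜 := ℝ) u
  rw [hu] at h1
  have h2 := h1.comp_hasDerivAt t h
  have h3 : ((u⁻¹ : (Matrix (Fin n) (Fin n) ℂ)ˣ) : Matrix (Fin n) (Fin n) ℂ) = (M t)⁻¹ := by
    rw [← hu, Matrix.coe_units_inv]
  simp only [Matrix.nonsing_inv_eq_ringInverse] at h3 ⊢
  simp only [h3, _root_.neg_apply, ContinuousLinearMap.mulLeftRight_apply] at h2
  exact h2

lemma hasDerivAt_fst {F : ℝ × ℝ → ℂ} (hF : Differentiable ℝ F) (t x : ℝ) :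
    HasDerivAt (fun s => F (s, x)) (fderiv ℝ F (t, x) (1, 0)) t :=
  (hF (t, x)).hasFDerivAt.comp_hasDerivAt t ((hasDerivAt_id t).prodMk (hasDerivAt_const t x))

lemma hasDerivAt_snd {F : ℝ × ℝ → ℂ} (hF : Differentiable ℝ F) (t x : ℝ) :
    HasDerivAt (fun s => F (t, s)) (fderiv ℝ F (t, x) (0, 1)) x :=
  (hF (t, x)).hasFDerivAt.comp_hasDerivAt x ((hasDerivAt_const x t).prodMk (hasDerivAt_id x))

/-- The partial derivatives of a `C²` matrix function, to second order; `gtx` occurs both as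
`∂_x ∂_t g` and as `∂_t ∂_x g`, which is the equality of mixed partials. -/
lemma exists_partials {n : ℕ} {g : ℝ → ℝ → Matrix (Fin n) (Fin n) ℂ}
    (hg : ∀ i j, ContDiff ℝ 2 fun p : ℝ × ℝ => g p.1 p.2 i j) (t x : ℝ) :
    HasDerivAt (fun s => g s x) (mdt g t x) t ∧ HasDerivAt (fun s => g t s) (mdx g t x) x ∧
    ∃ gtt gtx, HasDerivAt (fun s => mdt g s x) gtt t ∧ HasDerivAt (fun s => mdt g t s) gtx x ∧
      HasDerivAt (fun s => mdx g s x) gtx t := by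
  have d0 : ∀ i j, Differentiable ℝ fun p : ℝ × ℝ => g p.1 p.2 i j :=
    fun i j => (hg i j).differentiable (by norm_num)
  have d1 : ∀ i j, Differentiable ℝ (fderiv ℝ fun p : ℝ × ℝ => g p.1 p.2 i j) :=
    fun i j => ((hg i j).fderiv_right (m := 1) (by norm_num)).differentiable (by norm_num)
  have dv : ∀ i j (v : ℝ × ℝ),
      Differentiable ℝ fun p => fderiv ℝ (fun p : ℝ × ℝ => g p.1 p.2 i j) p v :=
    fun i j v => (d1 i j).clm_apply (differentiable_const v)
  have ht : ∀ t x i j,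
      mdt g t x i j = fderiv ℝ (fun p : ℝ × ℝ => g p.1 p.2 i j) (t, x) (1, 0) :=
    fun t x i j => (hasDerivAt_fst (d0 i j) t x).deriv
  have hx : ∀ t x i j,
      mdx g t x i j = fderiv ℝ (fun p : ℝ × ℝ => g p.1 p.2 i j) (t, x) (0, 1) :=
    fun t x i j => (hasDerivAt_snd (d0 i j) t x).deriv
  have happ : ∀ i j (v w p : ℝ × ℝ),
      fderiv ℝ (fun p => fderiv ℝ (fun p : ℝ × ℝ => g p.1 p.2 i j) p v) p w
        = fderiv ℝ (fderiv ℝ fun p : ℝ × ℝ => g p.1 p.2 i j) p w v := by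
    intro i j v w p
    rw [fderiv_clm_apply (d1 i j p) (differentiableAt_const v)]
    simp
  refine ⟨hasDerivAt_of_entries fun i j => ?_, hasDerivAt_of_entries fun i j => ?_,
    Matrix.of fun i j => fderiv ℝ (fun p =>
      fderiv ℝ (fun p : ℝ × ℝ => g p.1 p.2 i j) p (1, 0)) (t, x) (1, 0),
    Matrix.of fun i j => fderiv ℝ (fun p =>
      fderiv ℝ (fun p : ℝ × ℝ => g p.1 p.2 i j) p (1, 0)) (t, x) (0, 1),
    hasDerivAt_of_entries fun i j => ?_, hasDerivAt_of_entries fun i j => ?_,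
    hasDerivAt_of_entries fun i j => ?_⟩
  · rw [ht]
    exact hasDerivAt_fst (d0 i j) t x
  · rw [hx]
    exact hasDerivAt_snd (d0 i j) t x
  · simp only [ht]
    exact hasDerivAt_fst (dv i j (1, 0)) t x
  · simp only [ht]
    exact hasDerivAt_snd (dv i j (1, 0)) t x
  · have hsymm : IsSymmSndFDerivAt ℝ (fun p : ℝ × ℝ => g p.1 p.2 i j) (t, x) :=
      (hg i j).contDiffAt.isSymmSndFDerivAt (by simp)
    simp only [hx, Matrix.of_apply]
    rw [happ, hsymm.eq, ← happ]
    exact hasDerivAt_fst (dv i j (0, 1)) t x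

/-- The density `Tr (g⁻¹ (g_t + c g_x) ξ)` has zero `t`-derivative at each point: for a solution
`g` this derivative is `Tr ([g⁻¹ σ g, τ] ξ)`, and `ξ` commutes with `τ`. -/
lemma hasDerivAt_density {n : ℕ} (c : ℝ) (σ : Matrix (Fin n) (Fin n) ℂ)
    (τ : ℝ → Matrix (Fin n) (Fin n) ℂ) (g : ℝ → ℝ → Matrix (Fin n) (Fin n) ℂ)
    (hg : ∀ i j, ContDiff ℝ 2 fun p : ℝ × ℝ => g p.1 p.2 i j)
    (hginv : ∀ t x, IsUnit (g t x))
    (hMBN : ∀ t x, mdt (fun t x => mdt g t x * (g t x)⁻¹) t x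
        + (c : ℂ) • mdx (fun t x => mdt g t x * (g t x)⁻¹) t x
      = σ * (g t x * τ x * (g t x)⁻¹) - (g t x * τ x * (g t x)⁻¹) * σ)
    (ξ : ℝ → Matrix (Fin n) (Fin n) ℂ) (hξτ : ∀ x, ξ x * τ x = τ x * ξ x) (t x : ℝ) :
    HasDerivAt (fun s => ((g s x)⁻¹ * (mdt g s x + (c : ℂ) • mdx g s x) * ξ x).trace) 0 t := by
  obtain ⟨ht, hx, gtt, gtx, htt, htx, hxt⟩ := exists_partials hg t x
  have hit := hasDerivAt_matrix_inv ht (hginv t x)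
  have hix := hasDerivAt_matrix_inv hx (hginv t x)
  have eA : mdt (fun t x => mdt g t x * (g t x)⁻¹) t x = _ :=
    Matrix.ext fun i j => (hasDerivAt_entry (htt.mul hit) i j).deriv
  have eB : mdx (fun t x => mdt g t x * (g t x)⁻¹) t x = _ :=
    Matrix.ext fun i j => (hasDerivAt_entry (htx.mul hix) i j).deriv
  have key := hMBN t x
  rw [eA, eB] at key
  have hD := (hit.mul (htt.add (hxt.const_smul (c : ℂ)))).mul_const (ξ x)
  have hT : HasDerivAt (fun s => ((g s x)⁻¹ * (mdt g s x + (c : ℂ) • mdx g s x) * ξ x).trace)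
      (Matrix.trace _) t :=
    HasDerivAt.fun_sum fun i _ => hasDerivAt_entry hD i i
  convert hT using 1
  simp only [Pi.add_apply, Pi.smul_apply]
  have hdet : IsUnit (g t x).det := (Matrix.isUnit_iff_isUnit_det _).1 (hginv t x)
  have h1 : (g t x)⁻¹ * g t x = 1 := Matrix.nonsing_inv_mul _ hdet
  generalize (g t x)⁻¹ = k at *
  generalize g t x = a at *
  generalize mdt g t x = b at *
  generalize mdx g t x = d at *
  have h1' : ∀ z, k * (a * z) = z := fun z => by rw [← mul_assoc, h1, one_mul]
  -- Conjugating the equation by `g` gives the derivative of `g⁻¹ (g_t + c g_x)`.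
  have key2 := congrArg (fun z => k * z * a) key
  have e : -(k * b * k) * (b + (c : ℂ) • d) + k * (gtt + (c : ℂ) • gtx)
      = k * σ * a * τ x - τ x * (k * σ * a) := by
    simp only [mul_add, add_mul, mul_sub, sub_mul, smul_add, mul_neg, neg_mul, smul_neg,
      mul_smul_comm, smul_mul_assoc, mul_assoc, h1, h1', mul_one] at key2 ⊢
    rw [← key2]
    abel
  rw [e, sub_mul, Matrix.trace_sub, mul_assoc _ (τ x) (ξ x), ← hξτ, mul_assoc (τ x),
    Matrix.trace_mul_comm (τ x), mul_assoc (k * σ * a), sub_self]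

end MatrixCalculus


theorem MBN_loop_group_moment_map_conservation {n : ℕ} (c : ℝ)
    (σ : Matrix (Fin n) (Fin n) ℂ)
    (τ : ℝ → Matrix (Fin n) (Fin n) ℂ)
    (hτ : ∀ i j, Continuous fun x => τ x i j)
    (hτper : ∀ x, τ (x + 2 * Real.pi) = τ x)
    (g : ℝ → ℝ → Matrix (Fin n) (Fin n) ℂ)
    (hg : ∀ i j, ContDiff ℝ 2 fun p : ℝ × ℝ => g p.1 p.2 i j)
    (hginv : ∀ t x, IsUnit (g t x))
    (hgper : ∀ t x, g t (x + 2 * Real.pi) = g t x)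
    (hMBN : ∀ t x, mdt (fun t x => mdt g t x * (g t x)⁻¹) t x
        + (c : ℂ) • mdx (fun t x => mdt g t x * (g t x)⁻¹) t x
      = σ * (g t x * τ x * (g t x)⁻¹) - (g t x * τ x * (g t x)⁻¹) * σ)
    (ξ : ℝ → Matrix (Fin n) (Fin n) ℂ)
    (hξcont : ∀ i j, Continuous fun x => ξ x i j)
    (hξper : ∀ x, ξ (x + 2 * Real.pi) = ξ x)
    (hξτ : ∀ x, ξ x * τ x = τ x * ξ x) :
    ∀ t₁ t₂ : ℝ,
      (∫ x in (0:ℝ)..(2 * Real.pi),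
        ((mdt g t₁ x * (g t₁ x)⁻¹ + (c : ℂ) • (mdx g t₁ x * (g t₁ x)⁻¹))
          * (g t₁ x * ξ x * (g t₁ x)⁻¹)).trace)
      = ∫ x in (0:ℝ)..(2 * Real.pi),
        ((mdt g t₂ x * (g t₂ x)⁻¹ + (c : ℂ) • (mdx g t₂ x * (g t₂ x)⁻¹))
          * (g t₂ x * ξ x * (g t₂ x)⁻¹)).trace := by
  intro t₁ t₂
  have hdens : ∀ t x,
      ((mdt g t x * (g t x)⁻¹ + (c : ℂ) • (mdx g t x * (g t x)⁻¹))
        * (g t x * ξ x * (g t x)⁻¹)).trace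
      = ((g t x)⁻¹ * (mdt g t x + (c : ℂ) • mdx g t x) * ξ x).trace := by
    intro t x
    have h1 : (g t x)⁻¹ * g t x = 1 :=
      Matrix.nonsing_inv_mul _ ((Matrix.isUnit_iff_isUnit_det _).1 (hginv t x))
    rw [← smul_mul_assoc, ← add_mul, ← mul_assoc, Matrix.trace_mul_comm]
    congr 1
    simp only [← mul_assoc]
    rw [mul_assoc _ _ (g t x), h1, mul_one]
  simp only [hdens]
  congr 1
  funext x
  have hd := fun t => hasDerivAt_density c σ τ g hg hginv hMBN ξ hξτ t x
  exact is_const_of_deriv_eq_zero (fun t => (hd t).differentiableAt) (fun t => (hd t).deriv) t₁ t₂
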